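/- arXiv:2009.11479 — 2 statements merged into one kernel-verified Lean document; each statement's English description precedes it below -/
import Mathlib

section
/- Let n ≥ 1, let μ denote Lebesgue measure on ℝⁿ, and let D₁, D₂ ⊆ ℝⁿ be measurable sets with 0 < μ(D₁) < ∞ and 0 < μ(D₂) < ∞. Let g : ℝⁿ → ℝⁿ and let (U_i)_{i∈s} be a nonempty finite family of measurable subsets covering D₁ such that for each i there exists an affine equivalence T_i of ℝⁿ with g(x) = T_i(x) for all x ∈ U_i and T_i '' U_i = D₂. Let (V_j)_{j∈t} be a nonempty finite family of measurable subsets covering D₂. Then for every i ∈ s and j ∈ t, μ(U_i ∩ g⁻¹(V_j)) / μ(D₁) ≤ (max_{j'∈t} μ(V_{j'})/μ(D₂)) · (max_{i'∈s} μ(U_{i'})/μ(D₁)). -/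
open MeasureTheory ENNReal

/-!
An affine map multiplies all volumes by one constant, hence preserves ratios of volumes. On `U i`
the map `g` is affine with image `D₂`, and it sends `U i ∩ g ⁻¹' V j` into `V j`; so this piece
takes up at most the share `μ (V j) / μ D₂` of `U i`, which itself takes up `μ (U i) / μ D₁` of
`D₁`.
-/

section Fineness

variable {α ι : Type*} [MeasurableSpace α]

/-- The fineness `I` of a family of regions `U` in a domain `D`: the largest share of the
`μ`-measure of `D` taken up by a single region. It is a supremum in `ℝ≥0∞`, so that the family
may be infinite; it is meaningful when `μ D` is neither `0` nor `∞`. -/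
noncomputable def fineness (μ : Measure α) (D : Set α) (U : ι → Set α) : ℝ≥0∞ :=
  ⨆ i, μ (U i) / μ D

variable (μ : Measure α) (D : Set α)

theorem measure_div_le_fineness (U : ι → Set α) (i : ι) : μ (U i) / μ D ≤ fineness μ D U :=
  le_iSup (fun i => μ (U i) / μ D) i

theorem fineness_coe_finset (s : Finset ι) (U : ι → Set α) :
    fineness μ D (fun i : s => U i) = s.sup fun i => μ (U i) / μ D := by
  rw [fineness, Finset.sup_eq_iSup, iSup_subtype']

end Fineness

section Affine

variable {E : Type*} [NormedAddCommGroup E] [NormedSpace ℝ E] [FiniteDimensional ℝ E]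
  [MeasurableSpace E] [BorelSpace E] (μ : Measure E) [μ.IsAddHaarMeasure]

theorem addHaar_image_affineMap (T : E →ᵃ[ℝ] E) (A : Set E) :
    μ (T '' A) = ENNReal.ofReal |LinearMap.det T.linear| * μ A := by
  have image_eq : T '' A = (· + T 0) '' (T.linear '' A) := by
    rw [Set.image_image]
    exact Set.image_congr fun x _ => congrFun T.decomp x
  rw [image_eq, Set.image_add_right, measure_preimage_add_right, Measure.addHaar_image_linearMap]

theorem addHaar_inter_preimage_le {g : E → E} {T : E →ᵃ[ℝ] E} {U : Set E} (hgT : Set.EqOn g T U)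
    (hne_zero : μ (T '' U) ≠ 0) (hne_top : μ (T '' U) ≠ ∞) (V : Set E) :
    μ (U ∩ g ⁻¹' V) ≤ μ V / μ (T '' U) * μ U := by
  have image_subset : T '' (U ∩ g ⁻¹' V) ⊆ V := by
    rintro _ ⟨x, ⟨hxU, hxV⟩, rfl⟩
    exact hgT hxU ▸ hxV
  rw [ENNReal.mul_comm_div, ← mul_div_assoc,
    ENNReal.le_div_iff_mul_le (.inl hne_zero) (.inl hne_top)]
  calc μ (U ∩ g ⁻¹' V) * μ (T '' U)
      = μ (T '' (U ∩ g ⁻¹' V)) * μ U := by simp only [addHaar_image_affineMap]; ring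
    _ ≤ μ V * μ U := by gcongr

theorem fineness_comp_le_general {ι κ : Type*} {D₁ D₂ : Set E}
    (hD₁0 : μ D₁ ≠ 0) (hD₁fin : μ D₁ ≠ ∞) (hD₂0 : μ D₂ ≠ 0) (hD₂fin : μ D₂ ≠ ∞)
    {g : E → E} {U : ι → Set E}
    (hident : ∀ i, ∃ T : E →ᵃ[ℝ] E, Set.EqOn g T (U i) ∧ T '' U i = D₂) (V : κ → Set E) :
    fineness μ D₁ (fun p : ι × κ => U p.1 ∩ g ⁻¹' V p.2) ≤
      fineness μ D₂ V * fineness μ D₁ U := by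
  refine iSup_le fun ⟨i, j⟩ => ?_
  obtain ⟨T, hgT, rfl⟩ := hident i
  calc μ (U i ∩ g ⁻¹' V j) / μ D₁
      ≤ μ (V j) / μ (T '' U i) * μ (U i) / μ D₁ := by
        gcongr
        exact addHaar_inter_preimage_le μ hgT hD₂0 hD₂fin (V j)
    _ = μ (V j) / μ (T '' U i) * (μ (U i) / μ D₁) := mul_div_assoc _ _ _
    _ ≤ fineness μ (T '' U i) V * fineness μ D₁ U :=
        mul_le_mul' (measure_div_le_fineness μ _ V j) (measure_div_le_fineness μ D₁ U i)

end Affine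

/-- **Lemmas 3 and 4 combined**: if `g` identifies each region `U i` of a finite measurable
cover of `D₁` affinely onto `D₂`, and `(V j)` is a finite measurable cover of `D₂`, then the
relative volume of each region `U i ∩ g⁻¹(V j)` of the composition is bounded by the product
of the finenesses of the two covers. -/
theorem fineness_comp_le {ι κ : Type*} (n : ℕ) (hn : 1 ≤ n)
    (D₁ D₂ : Set (Fin n → ℝ)) (hD₁meas : MeasurableSet D₁) (hD₂meas : MeasurableSet D₂)
    (hD₁0 : 0 < volume D₁) (hD₁fin : volume D₁ < ⊤)
    (hD₂0 : 0 < volume D₂) (hD₂fin : volume D₂ < ⊤)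
    (g : (Fin n → ℝ) → (Fin n → ℝ))
    (s : Finset ι) (hs : s.Nonempty)
    (U : ι → Set (Fin n → ℝ))
    (hUmeas : ∀ i ∈ s, MeasurableSet (U i))
    (hUsub : ∀ i ∈ s, U i ⊆ D₁)
    (hUcover : (⋃ i ∈ s, U i) = D₁)
    (hident : ∀ i ∈ s, ∃ T : (Fin n → ℝ) ≃ᵃ[ℝ] (Fin n → ℝ),
      (∀ x ∈ U i, g x = T x) ∧ T '' U i = D₂)
    (t : Finset κ) (ht : t.Nonempty)
    (V : κ → Set (Fin n → ℝ))
    (hVmeas : ∀ j ∈ t, MeasurableSet (V j))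
    (hVsub : ∀ j ∈ t, V j ⊆ D₂)
    (hVcover : (⋃ j ∈ t, V j) = D₂) :
    ∀ i ∈ s, ∀ j ∈ t,
      volume (U i ∩ g ⁻¹' (V j)) / volume D₁ ≤
        (t.sup fun j' => volume (V j') / volume D₂) *
          (s.sup fun i' => volume (U i') / volume D₁) := by
  intro i hi j hj
  rw [← fineness_coe_finset, ← fineness_coe_finset]
  exact (measure_div_le_fineness volume D₁ _ (⟨i, hi⟩, ⟨j, hj⟩)).trans <|
    fineness_comp_le_general volume hD₁0.ne' hD₁fin.ne hD₂0.ne' hD₂fin.ne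
      (fun i : s => (hident i i.2).imp' AffineEquiv.toAffineMap fun _ => id) (fun j : t => V j)
end

section
/- Let σ : ℝ → ℝ, let x₀ ∈ ℝ, δ > 0, and s₋, s₊ ∈ ℝ with s₋ ≠ s₊, and assume σ(x₀ + u) = σ(x₀) + s₊·u for all u ∈ [0, δ] and σ(x₀ + u) = σ(x₀) + s₋·u for all u ∈ [−δ, 0]. Then for every x ∈ [−1, 1], max(0, x) = (σ(x₀ + δ·x) − σ(x₀) − s₋·δ·x) / (δ·(s₊ − s₋)). -/
theorem apply_add_eq_affine_add_relu_of_breakpoint {R : Type*} [Ring R] [LinearOrder R]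
    {σ : R → R} {x₀ a b sminus splus : R}
    (hplus : ∀ u ∈ Set.Icc 0 b, σ (x₀ + u) = σ x₀ + splus * u)
    (hminus : ∀ u ∈ Set.Icc a 0, σ (x₀ + u) = σ x₀ + sminus * u)
    {u : R} (hu : u ∈ Set.Icc a b) :
    σ (x₀ + u) = σ x₀ + sminus * u + (splus - sminus) * max 0 u := by
  rcases le_total 0 u with hu_nonneg | hu_nonpos
  · rw [max_eq_right hu_nonneg, hplus u ⟨hu_nonneg, hu.2⟩]
    noncomm_ring
  · rw [max_eq_left hu_nonpos, hminus u ⟨hu.1, hu_nonpos⟩, mul_zero, add_zero]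

theorem mul_mem_Icc_neg_self {R : Type*} [Ring R] [PartialOrder R] [IsOrderedRing R]
    {δ x : R} (hδ : 0 ≤ δ) (hx : x ∈ Set.Icc (-1) 1) : δ * x ∈ Set.Icc (-δ) δ :=
  ⟨by simpa using mul_le_mul_of_nonneg_left hx.1 hδ, mul_le_of_le_one_right hδ hx.2⟩

theorem relu_eq_affine_combination_of_breakpoint_general
    {K : Type*} [Field K] [LinearOrder K] [IsStrictOrderedRing K]
    {σ : K → K} {x₀ δ sminus splus : K} (hδ : 0 < δ) (hs : sminus ≠ splus)
    (hplus : ∀ u ∈ Set.Icc 0 δ, σ (x₀ + u) = σ x₀ + splus * u)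
    (hminus : ∀ u ∈ Set.Icc (-δ) 0, σ (x₀ + u) = σ x₀ + sminus * u)
    {x : K} (hx : x ∈ Set.Icc (-1) 1) :
    max 0 x = (σ (x₀ + δ * x) - σ x₀ - sminus * δ * x) / (δ * (splus - sminus)) := by
  have hscale : δ * (splus - sminus) ≠ 0 := mul_ne_zero hδ.ne' (sub_ne_zero.mpr hs.symm)
  have hrelu_scale : max 0 (δ * x) = δ * max 0 x := by
    rw [mul_max_of_nonneg _ _ hδ.le, mul_zero]
  rw [eq_div_iff hscale,
    apply_add_eq_affine_add_relu_of_breakpoint hplus hminus (mul_mem_Icc_neg_self hδ.le hx),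
    hrelu_scale]
  ring

/-- **Core of Lemma 1** (Yarotsky): a function `σ` which is affine with distinct slopes
`sminus ≠ splus` on the two sides of a breakpoint `x₀` (on intervals of radius `δ`) represents
the ReLU function on `[-1, 1]` by a fixed affine combination of one evaluation of `σ` and the
identity. -/
theorem relu_eq_affine_combination_of_breakpoint
    (σ : ℝ → ℝ) (x₀ δ sminus splus : ℝ) (hδ : 0 < δ) (hs : sminus ≠ splus)
    (hplus : ∀ u ∈ Set.Icc (0 : ℝ) δ, σ (x₀ + u) = σ x₀ + splus * u)
    (hminus : ∀ u ∈ Set.Icc (-δ) (0 : ℝ), σ (x₀ + u) = σ x₀ + sminus * u) :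
    ∀ x ∈ Set.Icc (-1 : ℝ) 1,
      max 0 x = (σ (x₀ + δ * x) - σ x₀ - sminus * δ * x) / (δ * (splus - sminus)) :=
  fun _ hx => relu_eq_affine_combination_of_breakpoint_general hδ hs hplus hminus hx
end
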